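/- For every pair of fixed integers d ≥ 0 and k ≥ 2, as the integer b → ∞ (with b > d), b/3 − u_{k;2}(b,d) = 2(d + 1/2)²/b^{2k+2} + (2k+2)(d + 1/2)²/b^{2k+3} + O(b^{−2k−4}), the implied constant depending on d and k. -/

import Mathlib

open Filter Asymptotics

/-- The `m`-th moment of the Irwin measure:
`u_{k;m}(b,d) = ∑_{l≥0} b^{-l(m+1)} ∑_{n=0}^{b^l-1} [n has exactly k base-b digits d
(padded to length l)] · n^m`. -/
noncomputable def momentU (b d k m : ℕ) : ℝ :=
  ∑' l : ℕ, ((b : ℝ) ^ (l * (m + 1)))⁻¹ *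
    ∑ n ∈ Finset.range (b ^ l),
      (if ((Finset.range l).filter fun i => n / b ^ i % b = d).card = k
        then (n : ℝ) ^ m else 0)

/-- Number of digits equal to `d` among the `l` lowest base-`b` digits. -/
def cntD (b d l n : ℕ) : ℕ := ((Finset.range l).filter fun i => n / b ^ i % b = d).card

/-- Unnormalized sums. -/
noncomputable def sumT (b d k m l : ℕ) : ℝ :=
  ∑ n ∈ Finset.range (b ^ l), (if cntD b d l n = k then (n : ℝ) ^ m else 0)

/-- Unnormalized sums for `k - 1` (zero if `k = 0`). -/
noncomputable def sumQ (b d k m l : ℕ) : ℝ :=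
  ∑ n ∈ Finset.range (b ^ l), (if cntD b d l n + 1 = k then (n : ℝ) ^ m else 0)

lemma sumQ_zero (b d m l : ℕ) : sumQ b d 0 m l = 0 := by
  simp [sumQ]

lemma sumQ_succ (b d k m l : ℕ) : sumQ b d (k + 1) m l = sumT b d k m l := by
  simp [sumQ, sumT]

lemma cntD_succ (b d l a n : ℕ) (ha : a < b) (hn : n < b ^ l) :
    cntD b d (l + 1) (n + b ^ l * a) = cntD b d l n + (if a = d then 1 else 0) := by
  have hb : 0 < b := by omega
  unfold cntD
  rw [Finset.range_add_one, Finset.filter_insert]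
  have h1 : (n + b ^ l * a) / b ^ l % b = a := by
    rw [Nat.add_mul_div_left _ _ (by positivity), Nat.div_eq_of_lt hn, zero_add,
      Nat.mod_eq_of_lt ha]
  have h2 : (Finset.range l).filter (fun i => (n + b ^ l * a) / b ^ i % b = d)
      = (Finset.range l).filter (fun i => n / b ^ i % b = d) := by
    apply Finset.filter_congr
    intro i hi
    have hi' : i < l := Finset.mem_range.mp hi
    obtain ⟨j, rfl⟩ : ∃ j, l = i + (j + 1) := ⟨l - i - 1, by omega⟩
    have : b ^ (i + (j + 1)) * a = b ^ i * (b * (b ^ j * a)) := by ring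
    rw [this, Nat.add_mul_div_left _ _ (by positivity), Nat.add_mul_mod_self_left]
  rw [h1, h2]
  split_ifs with h
  · rw [Finset.card_insert_of_notMem (by simp)]
  · simp

lemma sum_range_mul_split (B : ℕ) (f : ℕ → ℝ) (b : ℕ) :
    ∑ n ∈ Finset.range (B * b), f n
      = ∑ a ∈ Finset.range b, ∑ n ∈ Finset.range B, f (n + B * a) := by
  induction b with
  | zero => simp
  | succ b ih =>
    rw [Finset.sum_range_succ, ← ih, Nat.mul_succ, Finset.sum_range_add]
    congr 1
    exact Finset.sum_congr rfl fun n _ => by rw [add_comm]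

lemma sumT_succ (b d k m l : ℕ) (hd : d < b) :
    sumT b d k m (l + 1) =
      (∑ a ∈ Finset.range b, ∑ n ∈ Finset.range (b ^ l),
        (if cntD b d l n = k then ((n : ℝ) + b ^ l * a) ^ m else 0))
      - (∑ n ∈ Finset.range (b ^ l),
        (if cntD b d l n = k then ((n : ℝ) + b ^ l * d) ^ m else 0))
      + (∑ n ∈ Finset.range (b ^ l),
        (if cntD b d l n + 1 = k then ((n : ℝ) + b ^ l * d) ^ m else 0)) := by
  have hm : d ∈ Finset.range b := Finset.mem_range.mpr hd
  unfold sumT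
  rw [pow_succ, sum_range_mul_split, ← Finset.add_sum_erase _ _ hm,
    ← Finset.add_sum_erase _ (fun a : ℕ => ∑ n ∈ Finset.range (b ^ l),
        (if cntD b d l n = k then ((n : ℝ) + b ^ l * a) ^ m else 0)) hm]
  have e1 : ∑ n ∈ Finset.range (b ^ l), (if cntD b d (l + 1) (n + b ^ l * d) = k
      then ((n + b ^ l * d : ℕ) : ℝ) ^ m else 0) = ∑ n ∈ Finset.range (b ^ l),
        (if cntD b d l n + 1 = k then ((n : ℝ) + b ^ l * d) ^ m else 0) := by
    refine Finset.sum_congr rfl fun n hn => ?_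
    rw [cntD_succ _ _ _ _ _ hd (Finset.mem_range.mp hn)]
    simp
  have e2 : ∑ a ∈ (Finset.range b).erase d, ∑ n ∈ Finset.range (b ^ l),
      (if cntD b d (l + 1) (n + b ^ l * a) = k then ((n + b ^ l * a : ℕ) : ℝ) ^ m else 0)
      = ∑ a ∈ (Finset.range b).erase d, ∑ n ∈ Finset.range (b ^ l),
        (if cntD b d l n = k then ((n : ℝ) + b ^ l * a) ^ m else 0) := by
    refine Finset.sum_congr rfl fun a ha => Finset.sum_congr rfl fun n hn => ?_
    rw [Finset.mem_erase, Finset.mem_range] at ha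
    rw [cntD_succ _ _ _ _ _ ha.2 (Finset.mem_range.mp hn), if_neg ha.1]
    simp
  rw [e1, e2]
  ring

lemma sumite0 (s : Finset ℕ) (p : ℕ → Prop) [DecidablePred p] (c : ℝ) :
    ∑ n ∈ s, (if p n then ((n : ℝ) + c) ^ 0 else 0) = ∑ n ∈ s, (if p n then (n : ℝ) ^ 0 else 0) := by
  simp

lemma sumite1 (s : Finset ℕ) (p : ℕ → Prop) [DecidablePred p] (c : ℝ) :
    ∑ n ∈ s, (if p n then ((n : ℝ) + c) ^ 1 else 0)
      = ∑ n ∈ s, (if p n then (n : ℝ) ^ 1 else 0)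
        + c * ∑ n ∈ s, (if p n then (n : ℝ) ^ 0 else 0) := by
  rw [Finset.mul_sum, ← Finset.sum_add_distrib]
  refine Finset.sum_congr rfl fun n _ => ?_
  split_ifs <;> ring

lemma sumite2 (s : Finset ℕ) (p : ℕ → Prop) [DecidablePred p] (c : ℝ) :
    ∑ n ∈ s, (if p n then ((n : ℝ) + c) ^ 2 else 0)
      = ∑ n ∈ s, (if p n then (n : ℝ) ^ 2 else 0)
        + 2 * c * ∑ n ∈ s, (if p n then (n : ℝ) ^ 1 else 0)
        + c ^ 2 * ∑ n ∈ s, (if p n then (n : ℝ) ^ 0 else 0) := by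
  rw [Finset.mul_sum, Finset.mul_sum, ← Finset.sum_add_distrib, ← Finset.sum_add_distrib]
  refine Finset.sum_congr rfl fun n _ => ?_
  split_ifs <;> ring

lemma sum_id_real (b : ℕ) : ∑ a ∈ Finset.range b, (a : ℝ) = b * (b - 1) / 2 := by
  induction b with
  | zero => simp
  | succ b ih => rw [Finset.sum_range_succ, ih]; push_cast; ring

lemma sum_sq_real (b : ℕ) :
    ∑ a ∈ Finset.range b, (a : ℝ) ^ 2 = b * (b - 1) * (2 * b - 1) / 6 := by
  induction b with
  | zero => simp
  | succ b ih => rw [Finset.sum_range_succ, ih]; push_cast; ring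

lemma sumT_succ0 (b d k l : ℕ) (hd : d < b) :
    sumT b d k 0 (l + 1) = (b - 1) * sumT b d k 0 l + sumQ b d k 0 l := by
  rw [sumT_succ _ _ _ _ _ hd]
  simp only [sumite0]
  rw [Finset.sum_const, Finset.card_range, nsmul_eq_mul]
  unfold sumT sumQ
  ring

lemma sumT_succ1 (b d k l : ℕ) (hd : d < b) :
    sumT b d k 1 (l + 1) = (b - 1) * sumT b d k 1 l
      + (b * (b - 1) / 2 - d) * b ^ l * sumT b d k 0 l
      + sumQ b d k 1 l + d * b ^ l * sumQ b d k 0 l := by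
  rw [sumT_succ _ _ _ _ _ hd]
  simp only [sumite1]
  rw [Finset.sum_add_distrib, Finset.sum_const, Finset.card_range, nsmul_eq_mul,
    ← Finset.sum_mul, ← Finset.mul_sum, sum_id_real]
  unfold sumT sumQ
  ring

lemma sumT_succ2 (b d k l : ℕ) (hd : d < b) :
    sumT b d k 2 (l + 1) = (b - 1) * sumT b d k 2 l
      + 2 * (b * (b - 1) / 2 - d) * b ^ l * sumT b d k 1 l
      + (b * (b - 1) * (2 * b - 1) / 6 - d ^ 2) * (b ^ l) ^ 2 * sumT b d k 0 l
      + sumQ b d k 2 l + 2 * d * b ^ l * sumQ b d k 1 l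
      + d ^ 2 * (b ^ l) ^ 2 * sumQ b d k 0 l := by
  rw [sumT_succ _ _ _ _ _ hd]
  simp only [sumite2, mul_pow]
  rw [Finset.sum_add_distrib, Finset.sum_add_distrib, Finset.sum_const, Finset.card_range,
    nsmul_eq_mul, ← Finset.sum_mul, ← Finset.sum_mul, ← Finset.mul_sum, ← Finset.mul_sum,
    ← Finset.mul_sum, sum_id_real, sum_sq_real]
  unfold sumT sumQ
  ring

/-- Normalized terms. -/
noncomputable def gT (b d k m l : ℕ) : ℝ := ((b : ℝ) ^ (l * (m + 1)))⁻¹ * sumT b d k m l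
/-- Normalized terms for `k - 1`. -/
noncomputable def gQ (b d k m l : ℕ) : ℝ := ((b : ℝ) ^ (l * (m + 1)))⁻¹ * sumQ b d k m l

lemma gQ_zero (b d m l : ℕ) : gQ b d 0 m l = 0 := by simp [gQ, sumQ_zero]
lemma gQ_succ (b d k m l : ℕ) : gQ b d (k + 1) m l = gT b d k m l := by
  simp [gQ, gT, sumQ_succ]

lemma gT_succ0 (b d k l : ℕ) (hd : d < b) :
    gT b d k 0 (l + 1) = (b : ℝ)⁻¹ * ((b - 1) * gT b d k 0 l + gQ b d k 0 l) := by
  have hb : (b : ℝ) ≠ 0 := by exact_mod_cast (by omega : b ≠ 0)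
  unfold gT gQ
  rw [sumT_succ0 _ _ _ _ hd]
  field_simp
  ring

lemma gT_succ1 (b d k l : ℕ) (hd : d < b) :
    gT b d k 1 (l + 1) = ((b : ℝ) ^ 2)⁻¹ * ((b - 1) * gT b d k 1 l
      + (b * (b - 1) / 2 - d) * gT b d k 0 l + gQ b d k 1 l + d * gQ b d k 0 l) := by
  have hb : (b : ℝ) ≠ 0 := by exact_mod_cast (by omega : b ≠ 0)
  unfold gT gQ
  rw [sumT_succ1 _ _ _ _ hd]
  have hB : (b : ℝ) ^ l ≠ 0 := pow_ne_zero _ hb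
  simp only [pow_mul, pow_succ, pow_zero, one_mul, zero_add]
  generalize (b : ℝ) ^ l = B at *
  field_simp

lemma gT_succ2 (b d k l : ℕ) (hd : d < b) :
    gT b d k 2 (l + 1) = ((b : ℝ) ^ 3)⁻¹ * ((b - 1) * gT b d k 2 l
      + 2 * (b * (b - 1) / 2 - d) * gT b d k 1 l
      + (b * (b - 1) * (2 * b - 1) / 6 - d ^ 2) * gT b d k 0 l
      + gQ b d k 2 l + 2 * d * gQ b d k 1 l + d ^ 2 * gQ b d k 0 l) := by
  have hb : (b : ℝ) ≠ 0 := by exact_mod_cast (by omega : b ≠ 0)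
  unfold gT gQ
  rw [sumT_succ2 _ _ _ _ hd]
  have hB : (b : ℝ) ^ l ≠ 0 := pow_ne_zero _ hb
  simp only [pow_mul, pow_succ, pow_zero, one_mul, zero_add]
  generalize (b : ℝ) ^ l = B at *
  field_simp

lemma gT_zero (b d k m : ℕ) : gT b d k m 0 = if k = 0 ∧ m = 0 then 1 else 0 := by
  simp only [gT, sumT, cntD]
  rcases Nat.eq_zero_or_pos k with rfl | hk
  · rcases Nat.eq_zero_or_pos m with rfl | hm
    · simp
    · simp [hm.ne']
  · simp [hk.ne', hk.ne]

lemma sumT_nonneg (b d k m l : ℕ) : 0 ≤ sumT b d k m l :=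
  Finset.sum_nonneg fun n _ => by split_ifs <;> positivity

lemma gT_nonneg (b d k m l : ℕ) : 0 ≤ gT b d k m l :=
  mul_nonneg (by positivity) (sumT_nonneg ..)

lemma partial_le (b d : ℕ) (hd : d < b) (L : ℕ) :
    ∀ k, ∑ l ∈ Finset.range L, gT b d k 0 l ≤ b := by
  have hb : (1 : ℝ) ≤ b := by exact_mod_cast (by omega : 1 ≤ b)
  induction L with
  | zero => intro k; simp
  | succ L ih =>
    intro k
    rw [Finset.sum_range_succ', gT_zero]
    simp only [gT_succ0 _ _ _ _ hd]
    rw [← Finset.mul_sum, Finset.sum_add_distrib, ← Finset.mul_sum]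
    have h1 := ih k
    have h2 : (b : ℝ)⁻¹ * b = 1 := inv_mul_cancel₀ (by positivity)
    have h3 : (0 : ℝ) ≤ (b : ℝ)⁻¹ := by positivity
    have h4 : ((b : ℝ) - 1) * ∑ l ∈ Finset.range L, gT b d k 0 l ≤ (b - 1) * b :=
      mul_le_mul_of_nonneg_left h1 (by linarith)
    rcases k with _ | k
    · simp only [gQ_zero, Finset.sum_const_zero, and_self, if_true]
      have := mul_le_mul_of_nonneg_left h4 h3
      have e : (b : ℝ)⁻¹ * ((b - 1) * b) = b - 1 := by field_simp
      rw [add_zero]; linarith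
    · simp only [gQ_succ]
      have h5 := ih k
      have := mul_le_mul_of_nonneg_left (add_le_add h4 h5) h3
      have e : (b : ℝ)⁻¹ * ((b - 1) * b + b) = b := by field_simp; ring
      simp; linarith

lemma gT_le (b d k m l : ℕ) (hb : 0 < b) : gT b d k m l ≤ gT b d k 0 l := by
  have hB : (0 : ℝ) < (b : ℝ) ^ l := by positivity
  have : sumT b d k m l ≤ ((b : ℝ) ^ l) ^ m * sumT b d k 0 l := by
    unfold sumT
    rw [Finset.mul_sum]
    refine Finset.sum_le_sum fun n hn => ?_
    split_ifs
    · have : (n : ℝ) ≤ (b : ℝ) ^ l := by exact_mod_cast (Finset.mem_range.mp hn).le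
      rw [pow_zero, mul_one]
      gcongr
    · simp
  unfold gT
  calc _ ≤ ((b : ℝ) ^ (l * (m + 1)))⁻¹ * (((b : ℝ) ^ l) ^ m * sumT b d k 0 l) := by gcongr
    _ = _ := by
      simp only [pow_mul, pow_succ, zero_add, pow_zero, one_mul]
      generalize (b : ℝ) ^ l = B at *
      field_simp

lemma gT_summable (b d k m : ℕ) (hd : d < b) : Summable (gT b d k m) := by
  have h0 : Summable (gT b d k 0) :=
    summable_of_sum_range_le (gT_nonneg b d k 0) (fun L => partial_le b d hd L k)
  exact Summable.of_nonneg_of_le (gT_nonneg b d k m) (fun l => gT_le b d k m l (by omega)) h0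

lemma gQ_summable (b d k m : ℕ) (hd : d < b) : Summable (gQ b d k m) := by
  rcases k with _ | k
  · have : gQ b d 0 m = fun _ => 0 := funext fun l => gQ_zero b d m l
    rw [this]; exact summable_zero
  · have : gQ b d (k + 1) m = gT b d k m := funext fun l => gQ_succ b d k m l
    rw [this]; exact gT_summable b d k m hd

lemma momentU_eq (b d k m : ℕ) : momentU b d k m = ∑' l, gT b d k m l := rfl

/-- Moments for `k - 1`. -/
noncomputable def momentQ (b d k m : ℕ) : ℝ := ∑' l, gQ b d k m l

lemma momentQ_zero (b d m : ℕ) : momentQ b d 0 m = 0 := by simp [momentQ, gQ_zero]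
lemma momentQ_succ (b d k m : ℕ) : momentQ b d (k + 1) m = momentU b d k m := by
  simp [momentQ, gQ_succ, momentU_eq]

lemma hasT (b d k m : ℕ) (hd : d < b) : HasSum (gT b d k m) (momentU b d k m) :=
  (gT_summable b d k m hd).hasSum
lemma hasQ (b d k m : ℕ) (hd : d < b) : HasSum (gQ b d k m) (momentQ b d k m) :=
  (gQ_summable b d k m hd).hasSum

lemma momentU_split (b d k m : ℕ) (hd : d < b) :
    momentU b d k m = gT b d k m 0 + ∑' l, gT b d k m (l + 1) :=
  (gT_summable b d k m hd).tsum_eq_zero_add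

lemma rec0 (b d k : ℕ) (hd : d < b) :
    momentU b d k 0 = (if k = 0 then 1 else 0)
      + (b : ℝ)⁻¹ * ((b - 1) * momentU b d k 0 + momentQ b d k 0) := by
  conv_lhs => rw [momentU_split _ _ _ _ hd, gT_zero]
  simp only [gT_succ0 _ _ _ _ hd]
  rw [((((hasT b d k 0 hd).mul_left _).add (hasQ b d k 0 hd)).mul_left _).tsum_eq]
  simp

lemma rec1 (b d k : ℕ) (hd : d < b) :
    momentU b d k 1 = ((b : ℝ) ^ 2)⁻¹ * ((b - 1) * momentU b d k 1
      + (b * (b - 1) / 2 - d) * momentU b d k 0 + momentQ b d k 1 + d * momentQ b d k 0) := by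
  conv_lhs => rw [momentU_split _ _ _ _ hd, gT_zero]
  simp only [gT_succ1 _ _ _ _ hd]
  rw [((((((hasT b d k 1 hd).mul_left _).add ((hasT b d k 0 hd).mul_left _)).add
    (hasQ b d k 1 hd)).add ((hasQ b d k 0 hd).mul_left _)).mul_left _).tsum_eq]
  simp

lemma rec2 (b d k : ℕ) (hd : d < b) :
    momentU b d k 2 = ((b : ℝ) ^ 3)⁻¹ * ((b - 1) * momentU b d k 2
      + 2 * (b * (b - 1) / 2 - d) * momentU b d k 1
      + (b * (b - 1) * (2 * b - 1) / 6 - d ^ 2) * momentU b d k 0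
      + momentQ b d k 2 + 2 * d * momentQ b d k 1 + d ^ 2 * momentQ b d k 0) := by
  conv_lhs => rw [momentU_split _ _ _ _ hd, gT_zero]
  simp only [gT_succ2 _ _ _ _ hd]
  rw [((((((((hasT b d k 2 hd).mul_left _).add ((hasT b d k 1 hd).mul_left _)).add
    ((hasT b d k 0 hd).mul_left _)).add (hasQ b d k 2 hd)).add
    ((hasQ b d k 1 hd).mul_left _)).add ((hasQ b d k 0 hd).mul_left _)).mul_left _).tsum_eq]
  simp

lemma u0 (b d k : ℕ) (hd : d < b) : momentU b d k 0 = b := by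
  have hb : (b : ℝ) ≠ 0 := by exact_mod_cast (by omega : b ≠ 0)
  induction k with
  | zero =>
    have h := rec0 b d 0 hd
    rw [momentQ_zero] at h
    field_simp at h
    simp at h
    linarith
  | succ k ih =>
    have h := rec0 b d (k + 1) hd
    rw [momentQ_succ, ih] at h
    field_simp at h
    simp at h
    linarith

lemma u1 (b d k : ℕ) (hd : d < b) :
    ((b : ℝ) ^ 2 - b + 1) ^ (k + 1) * (momentU b d k 1 - b / 2) = - b * (d + 1 / 2) := by
  have hb : (b : ℝ) ≠ 0 := by exact_mod_cast (by omega : b ≠ 0)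
  induction k with
  | zero =>
    have h := rec1 b d 0 hd
    rw [momentQ_zero, momentQ_zero, u0 _ _ _ hd, eq_inv_mul_iff_mul_eq₀ (pow_ne_zero _ hb)] at h
    linear_combination h
  | succ k ih =>
    have h := rec1 b d (k + 1) hd
    rw [momentQ_succ, momentQ_succ, u0 _ _ _ hd, u0 _ _ _ hd,
      eq_inv_mul_iff_mul_eq₀ (pow_ne_zero _ hb)] at h
    rw [← ih]
    linear_combination ((b : ℝ) ^ 2 - b + 1) ^ (k + 1) * h

/-- `b/3 - u_{k;2} = t^{2k+2} R_k(t)` with `t = 1/b`. -/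
noncomputable def Rf (d : ℝ) : ℕ → ℝ → ℝ
  | 0 => fun t => (1 - t ^ 2 + t ^ 3)⁻¹ *
      ((1 - t - 2 * d * t ^ 2) * ((d + 1 / 2) * (1 - t + t ^ 2)⁻¹) + (d + d ^ 2 + 1 / 3))
  | k + 1 => fun t => (1 - t ^ 2 + t ^ 3)⁻¹ *
      (t * Rf d k t + 2 * (d + 1 / 2) ^ 2 * (1 - t) * (1 - t + t ^ 2)⁻¹ ^ (k + 2))

lemma q_pos (t : ℝ) : 0 < 1 - t + t ^ 2 := by nlinarith [sq_nonneg (t - 1 / 2)]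
lemma p_pos (t : ℝ) (ht : 0 ≤ t) : 0 < 1 - t ^ 2 + t ^ 3 := by
  nlinarith [mul_nonneg ht (sq_nonneg (t - 1)), sq_nonneg (t - 1/2)]

lemma u2 (b d k : ℕ) (hd : d < b) :
    (b : ℝ) / 3 - momentU b d k 2 = ((b : ℝ)⁻¹) ^ (2 * k + 2) * Rf d k (b : ℝ)⁻¹ := by
  have hb : (b : ℝ) ≠ 0 := by exact_mod_cast (by omega : b ≠ 0)
  have hb0 : (0 : ℝ) ≤ (b : ℝ)⁻¹ := by positivity
  have hv : ∀ k, momentU b d k 1 = b / 2 - (d + 1 / 2) * (b : ℝ)⁻¹ ^ (2 * k + 1)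
      * (1 - (b : ℝ)⁻¹ + (b : ℝ)⁻¹ ^ 2)⁻¹ ^ (k + 1) := by
    intro k
    have h := u1 b d k hd
    have hq := (q_pos (b : ℝ)⁻¹).ne'
    have e : (b : ℝ) ^ 2 - b + 1 = b ^ 2 * (1 - (b : ℝ)⁻¹ + (b : ℝ)⁻¹ ^ 2) := by field_simp
    rw [e] at h
    generalize (1 - (b : ℝ)⁻¹ + (b : ℝ)⁻¹ ^ 2) = q at *
    have hne : ((b : ℝ) ^ 2 * q) ^ (k + 1) ≠ 0 := by positivity
    rw [← sub_eq_zero]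
    apply mul_left_cancel₀ hne
    have e2 : ((b : ℝ) ^ 2 * q) ^ (k + 1) * ((b : ℝ)⁻¹ ^ (2 * k + 1) * q⁻¹ ^ (k + 1)) = b := by
      rw [mul_pow, ← pow_mul, show 2 * (k + 1) = (2 * k + 1) + 1 by ring, pow_succ (b : ℝ),
        inv_pow, inv_pow]
      field_simp
    linear_combination h + (d + 1 / 2 : ℝ) * e2
  have hp := (p_pos (b : ℝ)⁻¹ hb0).ne'
  have e3 : (b : ℝ) ^ 3 - b + 1 = b ^ 3 * (1 - (b : ℝ)⁻¹ ^ 2 + (b : ℝ)⁻¹ ^ 3) := by field_simp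
  have hq := (q_pos (b : ℝ)⁻¹).ne'
  have hbt : (b : ℝ) * (b : ℝ)⁻¹ = 1 := mul_inv_cancel₀ hb
  induction k with
  | zero =>
    have h := rec2 b d 0 hd
    rw [momentQ_zero, momentQ_zero, momentQ_zero, u0 _ _ _ hd, hv,
      eq_inv_mul_iff_mul_eq₀ (pow_ne_zero _ hb)] at h
    have h' : ((b : ℝ) ^ 3 - b + 1) * (b / 3 - momentU b d 0 2) =
        (b * (b - 1) - 2 * d) * ((d + 1 / 2) * (b : ℝ)⁻¹ ^ (2 * 0 + 1)
      * (1 - (b : ℝ)⁻¹ + (b : ℝ)⁻¹ ^ 2)⁻¹ ^ (0 + 1)) + b * (d + d ^ 2 + 1 / 3) := by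
      linear_combination -h
    have hne : (b : ℝ) ^ 3 - b + 1 ≠ 0 := by rw [e3]; positivity
    apply mul_left_cancel₀ hne
    rw [h', e3]
    simp only [Rf]
    generalize hpp : (1 - (b : ℝ)⁻¹ ^ 2 + (b : ℝ)⁻¹ ^ 3) = p at *
    generalize (1 - (b : ℝ)⁻¹ + (b : ℝ)⁻¹ ^ 2) = q at *
    clear e3 hpp
    simp only [mul_zero, zero_add, pow_one]
    field_simp
  | succ k ih =>
    have h := rec2 b d (k + 1) hd
    rw [momentQ_succ, momentQ_succ, momentQ_succ, u0 _ _ _ hd, u0 _ _ _ hd, hv, hv,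
      eq_inv_mul_iff_mul_eq₀ (pow_ne_zero _ hb)] at h
    have hne : (b : ℝ) ^ 3 - b + 1 ≠ 0 := by rw [e3]; positivity
    have e5 : (b : ℝ)⁻¹ ^ (2 * k + 1) * (1 - (b : ℝ)⁻¹ + (b : ℝ)⁻¹ ^ 2)⁻¹ ^ (k + 1)
        = (b ^ 2 - b + 1) * ((b : ℝ)⁻¹ ^ (2 * (k + 1) + 1)
          * (1 - (b : ℝ)⁻¹ + (b : ℝ)⁻¹ ^ 2)⁻¹ ^ (k + 1 + 1)) := by
      have e : (b : ℝ) ^ 2 - b + 1 = b ^ 2 * (1 - (b : ℝ)⁻¹ + (b : ℝ)⁻¹ ^ 2) := by field_simp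
      rw [e]
      generalize (1 - (b : ℝ)⁻¹ + (b : ℝ)⁻¹ ^ 2) = q at *
      rw [show 2 * (k + 1) + 1 = (2 * k + 1) + 2 by ring, pow_add _ (2 * k + 1) 2,
        pow_succ _ (k + 1)]
      field_simp
    have h' : ((b : ℝ) ^ 3 - b + 1) * (b / 3 - momentU b d (k + 1) 2) =
        (b / 3 - momentU b d k 2) +
        (b ^ 2 - b) * (2 * d + 1) * ((d + 1 / 2) * ((b : ℝ)⁻¹ ^ (2 * (k + 1) + 1)
      * (1 - (b : ℝ)⁻¹ + (b : ℝ)⁻¹ ^ 2)⁻¹ ^ (k + 1 + 1))) := by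
      linear_combination -h + 2 * d * (d + 1 / 2) * e5
    apply mul_left_cancel₀ hne
    rw [h', e3, ih]
    simp only [Rf]
    generalize hpp : (1 - (b : ℝ)⁻¹ ^ 2 + (b : ℝ)⁻¹ ^ 3) = p at *
    generalize (1 - (b : ℝ)⁻¹ + (b : ℝ)⁻¹ ^ 2)⁻¹ ^ (k + 1 + 1) = Q at *
    generalize Rf d k (b : ℝ)⁻¹ = R at *
    rw [show 2 * (k + 1) + 2 = (2 * k + 2) + 2 by ring,
      show 2 * (k + 1) + 1 = (2 * k + 2) + 1 by ring, pow_add _ (2 * k + 2) 2,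
      pow_add _ (2 * k + 2) 1]
    generalize (b : ℝ)⁻¹ ^ (2 * k + 2) = X at *
    clear e3 hpp e5 h h' ih
    field_simp

/-- Second order expansion at `0`. -/
def Jet (f : ℝ → ℝ) (a c : ℝ) : Prop :=
  ∃ e : ℝ → ℝ, ContinuousAt e 0 ∧ ∀ t, 0 ≤ t → f t = a + c * t + t ^ 2 * e t

lemma Jet.mul {f g : ℝ → ℝ} {a c a' c' : ℝ} (hf : Jet f a c) (hg : Jet g a' c') :
    Jet (fun t => f t * g t) (a * a') (a * c' + c * a') := by
  obtain ⟨e, he, h⟩ := hf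
  obtain ⟨e', he', h'⟩ := hg
  refine ⟨fun t => a * e' t + e t * a' + c * c' + t * (c * e' t + c' * e t) + t ^ 2 * e t * e' t,
    by fun_prop, fun t ht => ?_⟩
  simp only [h t ht, h' t ht]; ring

lemma Jet.add {f g : ℝ → ℝ} {a c a' c' : ℝ} (hf : Jet f a c) (hg : Jet g a' c') :
    Jet (fun t => f t + g t) (a + a') (c + c') := by
  obtain ⟨e, he, h⟩ := hf
  obtain ⟨e', he', h'⟩ := hg
  refine ⟨fun t => e t + e' t, by fun_prop, fun t ht => ?_⟩
  simp only [h t ht, h' t ht]; ring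

lemma jet_poly (a c x : ℝ) : Jet (fun t => a + c * t + x * t ^ 2) a c :=
  ⟨fun _ => x, by fun_prop, fun t _ => by ring⟩

lemma jet_q : Jet (fun t => (1 - t + t ^ 2)⁻¹) 1 1 := by
  refine ⟨fun t => - t * (1 - t + t ^ 2)⁻¹, ?_, fun t _ => ?_⟩
  · have : ∀ t : ℝ, 1 - t + t ^ 2 ≠ 0 := fun t => (q_pos t).ne'
    fun_prop (disch := exact this _)
  · have := (q_pos t).ne'
    field_simp
    ring

lemma jet_p : Jet (fun t => (1 - t ^ 2 + t ^ 3)⁻¹) 1 0 := by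
  refine ⟨fun t => (1 - t) * (1 - t ^ 2 + t ^ 3)⁻¹, ?_, fun t ht => ?_⟩
  · fun_prop (disch := norm_num)
  · have := (p_pos t ht).ne'
    field_simp
    ring

lemma jet_qpow (n : ℕ) : Jet (fun t => (1 - t + t ^ 2)⁻¹ ^ n) 1 n := by
  induction n with
  | zero => exact ⟨fun _ => 0, by fun_prop, fun t _ => by simp⟩
  | succ n ih =>
    have := ih.mul jet_q
    simp only [← pow_succ] at this
    convert this using 1
    · ring
    · push_cast; ring

lemma Jet.congr' {f g : ℝ → ℝ} {a c a' c' : ℝ} (hf : Jet f a c) (h : ∀ t, g t = f t)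
    (ha : a' = a) (hc : c' = c) : Jet g a' c' := by
  subst ha hc
  rwa [show g = f from funext h]

lemma jet_R0 (d : ℝ) : ∃ a c, Jet (Rf d 0) a c :=
  ⟨_, _, ((jet_p.mul (((jet_poly 1 (-1) (-2 * d)).mul
    ((jet_poly (d + 1 / 2) 0 0).mul jet_q)).add (jet_poly (d + d ^ 2 + 1 / 3) 0 0)))).congr'
    (fun t => by simp only [Rf]; ring) rfl rfl⟩

lemma jet_R_step (d : ℝ) (k : ℕ) (a c : ℝ) (h : Jet (Rf d k) a c) :
    Jet (Rf d (k + 1)) (2 * (d + 1 / 2) ^ 2) (a + 2 * (d + 1 / 2) ^ 2 * (k + 1)) :=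
  (jet_p.mul (((jet_poly 0 1 0).mul h).add ((jet_poly (2 * (d + 1 / 2) ^ 2)
    (-2 * (d + 1 / 2) ^ 2) 0).mul (jet_qpow (k + 2))))).congr'
    (fun t => by simp only [Rf]; ring) (by ring) (by push_cast; ring)

lemma jet_R1 (d : ℝ) (k : ℕ) : ∃ c, Jet (Rf d (k + 1)) (2 * (d + 1 / 2) ^ 2) c := by
  induction k with
  | zero =>
    obtain ⟨a, c, h⟩ := jet_R0 d
    exact ⟨_, jet_R_step d 0 a c h⟩
  | succ k ih =>
    obtain ⟨c, h⟩ := ih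
    exact ⟨_, jet_R_step d (k + 1) _ c h⟩

theorem momentU_two_asymptotic (d k : ℕ) (hk : 2 ≤ k) :
    (fun b : ℕ => (b : ℝ) / 3 - momentU b d k 2 -
      (2 * ((d : ℝ) + 1 / 2) ^ 2 / (b : ℝ) ^ (2 * k + 2)
        + (2 * (k : ℝ) + 2) * ((d : ℝ) + 1 / 2) ^ 2 / (b : ℝ) ^ (2 * k + 3)))
      =O[atTop] fun b : ℕ => ((b : ℝ) ^ (2 * k + 4))⁻¹ := by
  obtain ⟨j, rfl⟩ : ∃ j, k = j + 2 := ⟨k - 2, by omega⟩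
  obtain ⟨c, h⟩ := jet_R1 d j
  obtain ⟨e, he, hE⟩ := jet_R_step d (j + 1) _ c h
  have ht : Tendsto (fun b : ℕ => ((b : ℝ))⁻¹) atTop (nhds 0) :=
    tendsto_inv_atTop_nhds_zero_nat
  have hO : (fun b : ℕ => e (b : ℝ)⁻¹) =O[atTop] fun _ => (1 : ℝ) :=
    (he.tendsto.comp ht).isBigO_one ℝ
  have hmul := (isBigO_refl (fun b : ℕ => ((b : ℝ) ^ (2 * (j + 2) + 4))⁻¹) atTop).mul hO
  simp only [mul_one] at hmul
  refine hmul.congr' ?_ (EventuallyEq.refl _ _)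
  filter_upwards [eventually_gt_atTop d] with b hb
  rw [u2 b d (j + 2) hb, hE _ (by positivity)]
  push_cast
  simp only [div_eq_mul_inv, ← inv_pow]
  ring
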